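/- Laplace transform of the Wright N-function (equation (2.6)). Let 0 < β < 1/2, τ > 0 and p > 0. Then ∫_0^∞ e^{−pt}·N(τ/t^{2β}; β) dt = (1/p)·exp(−τ·p^{2β}). -/

import Mathlib

open MeasureTheory Real Filter Set

/-- The Wright-type auxiliary function `N(y; β)`. -/
noncomputable def Nwr (y β : ℝ) : ℝ :=
  ∑' n : ℕ, (-y) ^ n / ((n.factorial : ℝ) * Real.Gamma (-2 * β * (n : ℝ) + 1))

/-!
Put `α = 2β` and `g z = exp (-τ z ^ α) - 1`. Then `N (τ / t ^ α) - 1` is the inverse Laplace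
transform of `g z / z` along a Bromwich contour bent into two rays at angles `±θ`, where
`π / 2 < θ < π` makes `exp (t z)` decay on the rays and `α θ ≤ π / 2` gives `g z = O(|z| ^ α)`
between them: expanding the exponential, each power `z ^ (n α)` contributes
`t ^ (-n α) / Γ(1 - n α)` by Hankel's formula.

By Fubini, the Laplace transform at `p` of such a ray integral is
`π⁻¹ Im ∫ g(r u) / (r (p - r u)) dr` with `u = exp (i θ)`. If `g` vanishes at `p`, there is no pole
and the ray can be rotated to the positive real axis, where the integrand is real, so that the
transform is zero. Subtracting `(g p / p ^ α) z ^ α` reduces the general case to this one, and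
the transform of `z ^ α` is explicit.
-/

section

open Complex (I slitPlane)
open scoped Complex Topology

section Strip

variable {E : Type*} [NormedAddCommGroup E] [NormedSpace ℂ E] {F : ℂ → E} {a b : ℝ}

lemma tendsto_intervalIntegral_vertical {l : Filter ℝ}
    (hF : Tendsto F (comap Complex.re l ⊓ 𝓟 (Complex.im ⁻¹' uIcc a b)) (𝓝 0)) :
    Tendsto (fun x : ℝ => ∫ y in a..b, F (x + y * I)) l (𝓝 0) := by
  refine Metric.tendsto_nhds.2 fun ε hε => ?_
  have hd : 0 < |b - a| + 1 := by positivity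
  have hev := (Metric.tendsto_nhds.1 hF) (ε / (|b - a| + 1)) (by positivity)
  rw [eventually_inf_principal, eventually_comap] at hev
  filter_upwards [hev] with x hx
  have hbound : ‖∫ y in a..b, F (x + y * I)‖ ≤ ε / (|b - a| + 1) * |b - a| :=
    intervalIntegral.norm_integral_le_of_norm_le_const fun y hy => by
      simpa using (hx (x + y * I) (by simp) (by simpa using uIoc_subset_uIcc hy)).le
  calc dist (∫ y in a..b, F (x + y * I)) 0 ≤ ε / (|b - a| + 1) * |b - a| := by simpa using hbound
    _ < ε := by rw [div_mul_eq_mul_div, div_lt_iff₀ hd]; nlinarith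

variable (hF : DifferentiableOn ℂ F (Complex.im ⁻¹' uIcc a b))
  (hbot : Tendsto F (comap Complex.re atBot ⊓ 𝓟 (Complex.im ⁻¹' uIcc a b)) (𝓝 0))
  (htop : Tendsto F (comap Complex.re atTop ⊓ 𝓟 (Complex.im ⁻¹' uIcc a b)) (𝓝 0))

include hF hbot htop

lemma tendsto_intervalIntegral_sub_of_strip :
    Tendsto (fun R : ℝ => (∫ x in -R..R, F (x + a * I)) - ∫ x in -R..R, F (x + b * I))
      atTop (𝓝 0) := by
  have hleft := (tendsto_intervalIntegral_vertical hbot).comp tendsto_neg_atTop_atBot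
  have hlim := (hleft.sub (tendsto_intervalIntegral_vertical htop)).const_smul I
  rw [sub_zero, smul_zero] at hlim
  refine hlim.congr fun R => ?_
  have hrect := Complex.integral_boundary_rect_eq_zero_of_differentiableOn F
    (⟨-R, a⟩ : ℂ) (⟨R, b⟩ : ℂ) (hF.mono fun z hz => hz.2)
  rw [Function.comp_apply, smul_sub, eq_comm, ← sub_eq_zero, ← hrect]
  abel

theorem integral_horizontal_eq_of_strip
    (ha : Integrable fun x : ℝ => F (x + a * I)) (hb : Integrable fun x : ℝ => F (x + b * I)) :
    ∫ x : ℝ, F (x + a * I) = ∫ x : ℝ, F (x + b * I) :=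
  sub_eq_zero.1 <| tendsto_nhds_unique
    ((intervalIntegral_tendsto_integral ha tendsto_neg_atTop_atBot tendsto_id).sub
      (intervalIntegral_tendsto_integral hb tendsto_neg_atTop_atBot tendsto_id))
    (tendsto_intervalIntegral_sub_of_strip hF hbot htop)

end Strip

theorem im_integral_horizontal_eq_zero_of_strip {F : ℂ → ℂ} {b : ℝ}
    (hF : DifferentiableOn ℂ F (Complex.im ⁻¹' uIcc 0 b))
    (hbot : Tendsto F (comap Complex.re atBot ⊓ 𝓟 (Complex.im ⁻¹' uIcc 0 b)) (𝓝 0))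
    (htop : Tendsto F (comap Complex.re atTop ⊓ 𝓟 (Complex.im ⁻¹' uIcc 0 b)) (𝓝 0))
    (hreal : ∀ x : ℝ, (F x).im = 0) (hb : Integrable fun x : ℝ => F (x + b * I)) :
    (∫ x : ℝ, F (x + b * I)).im = 0 := by
  have hlim := (tendsto_intervalIntegral_sub_of_strip hF hbot htop).add
    (intervalIntegral_tendsto_integral hb tendsto_neg_atTop_atBot tendsto_id)
  simp only [id, sub_add_cancel, zero_add, Complex.ofReal_zero, zero_mul, add_zero] at hlim
  refine tendsto_nhds_unique ((Complex.continuous_im.tendsto _).comp hlim)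
    (tendsto_const_nhds.congr fun R => ?_)
  have hre : ∀ x : ℝ, F x = ((F x).re : ℂ) := fun x => by
    rw [Complex.ext_iff]
    simp [hreal]
  rw [Function.comp_apply, intervalIntegral.integral_congr fun x _ => hre x,
    intervalIntegral.integral_ofReal, Complex.ofReal_im]

section ExpSubstitution

variable {E : Type*} [NormedAddCommGroup E] [NormedSpace ℝ E] (f : ℝ → E)

lemma integral_exp_smul_comp_exp : ∫ x : ℝ, rexp x • f (rexp x) = ∫ r in Ioi 0, f r := by
  have h := integral_image_eq_integral_abs_deriv_smul MeasurableSet.univ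
    (fun x _ => (Real.hasDerivAt_exp x).hasDerivWithinAt) Real.exp_injective.injOn f
  simpa [image_univ, abs_of_pos (Real.exp_pos _)] using h.symm

lemma integrable_exp_smul_comp_exp :
    (Integrable fun x : ℝ => rexp x • f (rexp x)) ↔ IntegrableOn f (Ioi 0) := by
  have h := integrableOn_image_iff_integrableOn_abs_deriv_smul MeasurableSet.univ
    (fun x _ => (Real.hasDerivAt_exp x).hasDerivWithinAt) Real.exp_injective.injOn f
  simpa [image_univ, abs_of_pos (Real.exp_pos _)] using h.symm

end ExpSubstitution

/-- The closed sector of opening `θ` above the positive real axis, through which the ray at angle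
`θ` is rotated to the positive real axis. The vertex is removed, being a singularity of the
integrands. -/
def sector (θ : ℝ) : Set ℂ := {z | z ≠ 0 ∧ z.arg ∈ Icc 0 θ}

lemma sector_subset_slitPlane {θ : ℝ} (hθ : θ < π) : sector θ ⊆ slitPlane := fun _ hz =>
  Complex.mem_slitPlane_iff_arg.2 ⟨(hz.2.2.trans_lt hθ).ne, hz.1⟩

lemma exp_mem_sector {θ : ℝ} (hθ : θ ≤ π) {w : ℂ} (hw : w.im ∈ Icc 0 θ) : cexp w ∈ sector θ := by
  refine ⟨Complex.exp_ne_zero w, ?_⟩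
  rwa [Complex.arg_exp, (toIocMod_eq_self Real.two_pi_pos).2 ⟨?_, ?_⟩]
  · linarith [hw.1, Real.pi_pos]
  · linarith [hw.2]

theorem im_integral_ray_eq_zero {F : ℂ → ℂ} {θ : ℝ} (hθ₀ : 0 ≤ θ) (hθ : θ ≤ π)
    (hF : DifferentiableOn ℂ F (sector θ)) (hreal : ∀ r : ℝ, 0 < r → (F r).im = 0)
    (h₀ : Tendsto (fun z => z * F z) (𝓝[sector θ] 0) (𝓝 0))
    (hinf : Tendsto (fun z => z * F z) (Bornology.cobounded ℂ ⊓ 𝓟 (sector θ)) (𝓝 0))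
    (hint : IntegrableOn (fun r : ℝ => F (r * cexp (θ * I)) * cexp (θ * I)) (Ioi 0)) :
    (∫ r in Ioi (0 : ℝ), F (r * cexp (θ * I)) * cexp (θ * I)).im = 0 := by
  set G : ℂ → ℂ := fun w => cexp w * F (cexp w) with hG
  have hmaps : MapsTo cexp (Complex.im ⁻¹' uIcc 0 θ) (sector θ) := fun w hw =>
    exp_mem_sector hθ (by simpa [uIcc_of_le hθ₀] using hw)
  have hray : ∀ x : ℝ, rexp x • (F (rexp x * cexp (θ * I)) * cexp (θ * I)) = G (x + θ * I) := by
    intro x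
    simp only [hG, Complex.exp_add, Complex.ofReal_exp, Complex.real_smul]
    ring
  have hprincipal : Tendsto cexp (𝓟 (Complex.im ⁻¹' uIcc 0 θ)) (𝓟 (sector θ)) :=
    tendsto_principal_principal.2 hmaps
  rw [← integrable_exp_smul_comp_exp] at hint
  rw [← integral_exp_smul_comp_exp]
  simp_rw [hray] at hint ⊢
  refine im_integral_horizontal_eq_zero_of_strip
    (Complex.differentiable_exp.differentiableOn.mul
      (hF.comp Complex.differentiable_exp.differentiableOn hmaps))
    (h₀.comp (Complex.tendsto_exp_comap_re_atBot.inf hprincipal))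
    (hinf.comp (Complex.tendsto_exp_comap_re_atTop.inf hprincipal)) (fun x => ?_) hint
  simp only [hG, ← Complex.ofReal_exp, Complex.im_ofReal_mul, hreal _ (Real.exp_pos x), mul_zero]

section DividedDifference

variable {g : ℂ → ℂ} {α C p θ : ℝ}

lemma im_dslope_ofReal_eq_zero {r : ℝ} (hg : DifferentiableAt ℂ g p) (hp : 0 < p) (hr : 0 < r)
    (hreal : ∀ r : ℝ, 0 < r → (g r).im = 0) : (dslope g p r).im = 0 := by
  rcases eq_or_ne r p with rfl | hrp
  · have hderiv : HasDerivAt (fun x : ℝ => (g x).im) (deriv g r).im r :=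
      Complex.imCLM.hasFDerivAt.comp_hasDerivAt r hg.hasDerivAt.comp_ofReal
    rw [dslope_same]
    refine hderiv.unique ((hasDerivAt_const r (0 : ℝ)).congr_of_eventuallyEq ?_)
    filter_upwards [lt_mem_nhds hr] with x hx using hreal x hx
  · rw [dslope_of_ne _ (by exact_mod_cast hrp), slope_def_module, smul_eq_mul,
      ← Complex.ofReal_sub, ← Complex.ofReal_inv, Complex.im_ofReal_mul, Complex.sub_im,
      hreal r hr, hreal p hp, sub_zero, mul_zero]

lemma dslope_eq_div_of_eq_zero {z : ℂ} (hgp : g p = 0) (hz : z ≠ p) :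
    dslope g p z = g z / (z - p) := by
  rw [dslope_of_ne _ hz, slope_def_field, hgp, sub_zero]

lemma tendsto_dslope_nhdsWithin_zero {S : Set ℂ} (hp : 0 < p) (hα : 0 < α) (hgp : g p = 0)
    (hbound : ∀ z ∈ S, ‖g z‖ ≤ C * ‖z‖ ^ α) : Tendsto (dslope g p) (𝓝[S] 0) (𝓝 0) := by
  have hpow : Tendsto (fun z : ℂ => C * ‖z‖ ^ α) (𝓝[S] 0) (𝓝 0) := by
    have hcont : Continuous fun z : ℂ => C * ‖z‖ ^ α :=
      continuous_const.mul (continuous_norm.rpow_const fun _ => Or.inr hα.le)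
    simpa [hα.ne'] using (hcont.tendsto 0).mono_left nhdsWithin_le_nhds
  have hg0 : Tendsto g (𝓝[S] 0) (𝓝 0) :=
    squeeze_zero_norm' (eventually_mem_nhdsWithin.mono hbound) hpow
  have hp0 : (0 : ℂ) ≠ p := by exact_mod_cast hp.ne
  have hsub : Tendsto (fun z : ℂ => z - p) (𝓝[S] 0) (𝓝 (0 - p)) :=
    ((continuous_id.sub continuous_const).tendsto 0).mono_left nhdsWithin_le_nhds
  have hdiv := hg0.div hsub (sub_ne_zero.2 hp0)
  rw [zero_div] at hdiv
  refine hdiv.congr' (eventually_nhdsWithin_of_eventually_nhds ?_)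
  filter_upwards [isOpen_ne.mem_nhds hp0] with z hz using (dslope_eq_div_of_eq_zero hgp hz).symm

lemma tendsto_dslope_cobounded {S : Set ℂ} (hα : α < 1) (hgp : g p = 0)
    (hbound : ∀ z ∈ S, ‖g z‖ ≤ C * ‖z‖ ^ α) :
    Tendsto (dslope g p) (Bornology.cobounded ℂ ⊓ 𝓟 S) (𝓝 0) := by
  have hpow : Tendsto (fun z : ℂ => 2 * C * ‖z‖ ^ (-(1 - α))) (Bornology.cobounded ℂ ⊓ 𝓟 S)
      (𝓝 0) := by
    simpa using (((tendsto_rpow_neg_atTop (sub_pos.2 hα)).comp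
      tendsto_norm_cobounded_atTop).const_mul (2 * C)).mono_left inf_le_left
  refine squeeze_zero_norm' ?_ hpow
  rw [eventually_inf_principal]
  filter_upwards [tendsto_norm_cobounded_atTop.eventually_gt_atTop (2 * |p|)] with z hz hzS
  have hz0 : 0 < ‖z‖ := by linarith [abs_nonneg p]
  have hsub : ‖z‖ / 2 ≤ ‖z - p‖ := by
    have := norm_sub_norm_le z (p : ℂ)
    rw [Complex.norm_real, Real.norm_eq_abs] at this
    linarith
  have hzp : z ≠ p := fun h => by
    rw [h, sub_self, norm_zero, ← h] at hsub
    linarith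
  have hC : 0 ≤ C * ‖z‖ ^ α := (norm_nonneg _).trans (hbound z hzS)
  calc ‖dslope g p z‖ = ‖g z‖ / ‖z - p‖ := by rw [dslope_eq_div_of_eq_zero hgp hzp, norm_div]
    _ ≤ C * ‖z‖ ^ α / (‖z‖ / 2) := div_le_div₀ hC (hbound z hzS) (by positivity) hsub
    _ = 2 * C * ‖z‖ ^ (-(1 - α)) := by
      rw [neg_sub, Real.rpow_sub_one hz0.ne']
      field_simp

theorem im_integral_ray_div_sub_eq_zero (hp : 0 < p) (hα₀ : 0 < α) (hα₁ : α < 1) (hθ₀ : 0 < θ)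
    (hθ : θ < π) (hg : DifferentiableOn ℂ g slitPlane) (hreal : ∀ r : ℝ, 0 < r → (g r).im = 0)
    (hgp : g p = 0) (hbound : ∀ z ∈ sector θ, ‖g z‖ ≤ C * ‖z‖ ^ α)
    (hint : IntegrableOn
      (fun r : ℝ => g (r * cexp (θ * I)) / (r * (p - r * cexp (θ * I)))) (Ioi 0)) :
    (∫ r in Ioi (0 : ℝ), g (r * cexp (θ * I)) / (r * (p - r * cexp (θ * I)))).im = 0 := by
  have hslit : slitPlane ∈ 𝓝 (p : ℂ) :=
    Complex.isOpen_slitPlane.mem_nhds (Complex.ofReal_mem_slitPlane.2 hp)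
  -- replacing `g z / (z - p)` by the divided difference fills in the removable singularity at `p`
  set F : ℂ → ℂ := fun z => -dslope g p z / z with hF
  have hmul : ∀ z ∈ sector θ, -dslope g p z = z * F z := fun z hz => (mul_div_cancel₀ _ hz.1).symm
  have hray : ∀ r ∈ Ioi (0 : ℝ), g (r * cexp (θ * I)) / (r * (p - r * cexp (θ * I))) =
      F (r * cexp (θ * I)) * cexp (θ * I) := by
    intro r hr
    have hrp : r * cexp (θ * I) ≠ p := by
      intro h
      have him := congrArg Complex.im h
      rw [Complex.im_ofReal_mul, Complex.exp_ofReal_mul_I_im, Complex.ofReal_im] at him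
      exact (mul_pos hr (Real.sin_pos_of_pos_of_lt_pi hθ₀ hθ)).ne' him
    have hr0 : (r : ℂ) ≠ 0 := by exact_mod_cast (mem_Ioi.1 hr).ne'
    have hu := Complex.exp_ne_zero (θ * I)
    have h₁ := sub_ne_zero.2 hrp
    have h₂ := sub_ne_zero.2 hrp.symm
    simp only [hF, dslope_eq_div_of_eq_zero hgp hrp]
    field_simp
    ring
  rw [integrableOn_congr_fun hray measurableSet_Ioi] at hint
  rw [setIntegral_congr_fun measurableSet_Ioi hray]
  refine im_integral_ray_eq_zero hθ₀.le hθ.le ?_ (fun r hr => ?_) ?_ ?_ hint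
  · exact ((((Complex.differentiableOn_dslope hslit).2 hg).mono
      (sector_subset_slitPlane hθ)).neg).div differentiableOn_id fun z hz => hz.1
  · simp only [hF]
    rw [Complex.div_ofReal_im, Complex.neg_im,
      im_dslope_ofReal_eq_zero (hg.differentiableAt hslit) hp hr hreal, neg_zero, zero_div]
  · simpa only [neg_zero] using (tendsto_dslope_nhdsWithin_zero hp hα₀ hgp hbound).neg.congr'
      (eventually_mem_nhdsWithin.mono hmul)
  · simpa only [neg_zero] using (tendsto_dslope_cobounded hα₁ hgp hbound).neg.congr'
      (mem_inf_of_right (mem_principal.2 hmul))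

/-- Subtracting a multiple of `z ^ α` makes the numerator vanish at the pole `p`. -/
theorem im_integral_ray_div_sub_eq_mul (hp : 0 < p) (hα₀ : 0 < α) (hα₁ : α < 1) (hθ₀ : 0 < θ)
    (hθ : θ < π) (hg : DifferentiableOn ℂ g slitPlane) (hreal : ∀ r : ℝ, 0 < r → (g r).im = 0)
    (hbound : ∀ z ∈ sector θ, ‖g z‖ ≤ C * ‖z‖ ^ α)
    (hgint : IntegrableOn
      (fun r : ℝ => g (r * cexp (θ * I)) / (r * (p - r * cexp (θ * I)))) (Ioi 0))
    (hpow : IntegrableOn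
      (fun r : ℝ => (r * cexp (θ * I)) ^ (α : ℂ) / (r * (p - r * cexp (θ * I)))) (Ioi 0)) :
    (∫ r in Ioi (0 : ℝ), g (r * cexp (θ * I)) / (r * (p - r * cexp (θ * I)))).im =
      (g p).re / p ^ α *
        (∫ r in Ioi (0 : ℝ), (r * cexp (θ * I)) ^ (α : ℂ) / (r * (p - r * cexp (θ * I)))).im := by
  set c : ℝ := (g p).re / p ^ α with hc
  have hpα : p ^ α ≠ 0 := (Real.rpow_pos_of_pos hp α).ne'
  have hofReal : ∀ r : ℝ, 0 < r → (r : ℂ) ^ (α : ℂ) = (r ^ α : ℝ) := fun r hr =>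
    (Complex.ofReal_cpow hr.le α).symm
  have hdiff : DifferentiableOn ℂ (fun z => g z - c * z ^ (α : ℂ)) slitPlane :=
    hg.sub fun z hz => ((differentiableAt_id.cpow_const hz).const_mul _).differentiableWithinAt
  have hsubst : ∀ r : ℝ, (g (r * cexp (θ * I)) - c * (r * cexp (θ * I)) ^ (α : ℂ)) /
      (r * (p - r * cexp (θ * I))) = g (r * cexp (θ * I)) / (r * (p - r * cexp (θ * I))) -
        c * ((r * cexp (θ * I)) ^ (α : ℂ) / (r * (p - r * cexp (θ * I)))) := fun r => by ring
  have hzero := im_integral_ray_div_sub_eq_zero (C := C + |c|) hp hα₀ hα₁ hθ₀ hθ hdiff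
    (fun r hr => ?_) ?_ (fun z hz => ?_) ?_
  · simp_rw [hsubst] at hzero
    rwa [integral_sub hgint (hpow.const_mul _), integral_const_mul, Complex.sub_im,
      Complex.im_ofReal_mul, sub_eq_zero] at hzero
  · rw [hofReal r hr, Complex.sub_im, hreal r hr, ← Complex.ofReal_mul, Complex.ofReal_im, sub_zero]
  · rw [hofReal p hp, ← Complex.ofReal_mul, hc, div_mul_cancel₀ _ hpα, sub_eq_zero]
    exact Complex.ext rfl (hreal p hp)
  · calc ‖g z - c * z ^ (α : ℂ)‖ ≤ ‖g z‖ + ‖c * z ^ (α : ℂ)‖ := norm_sub_le _ _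
      _ = ‖g z‖ + |c| * ‖z‖ ^ α := by
        rw [norm_mul, Complex.norm_cpow_real, Complex.norm_real, Real.norm_eq_abs]
      _ ≤ (C + |c|) * ‖z‖ ^ α := by linarith [hbound z hz]
  · simp only [hsubst]
    exact hgint.sub (hpow.const_mul _)

end DividedDifference

lemma integrableOn_rpow_div_add_mul {α p k : ℝ} (hα₀ : 0 < α) (hα₁ : α < 1) (hp : 0 < p)
    (hk : 0 < k) : IntegrableOn (fun r : ℝ => r ^ (α - 1) / (p + k * r)) (Ioi 0) := by
  rw [← Ioc_union_Ioi_eq_Ioi zero_le_one]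
  refine IntegrableOn.union ?_ ?_
  · have h : IntegrableOn (fun r : ℝ => r ^ (α - 1)) (Ioc 0 1) :=
      (intervalIntegrable_iff_integrableOn_Ioc_of_le zero_le_one).1
        (intervalIntegral.intervalIntegrable_rpow' (by linarith))
    refine (h.const_mul p⁻¹).mono' (Measurable.aestronglyMeasurable (by fun_prop)) ?_
    filter_upwards [ae_restrict_mem measurableSet_Ioc] with r hr
    have hr0 : 0 < r := hr.1
    rw [Real.norm_of_nonneg (by positivity), inv_mul_eq_div]
    gcongr
    linarith [mul_pos hk hr0]
  · have h := (integrableOn_Ioi_rpow_of_lt (by linarith : α - 1 - 1 < -1) one_pos).const_mul k⁻¹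
    refine h.mono' (Measurable.aestronglyMeasurable (by fun_prop)) ?_
    filter_upwards [ae_restrict_mem measurableSet_Ioi] with r hr
    have hr0 : 0 < r := one_pos.trans hr
    rw [Real.norm_of_nonneg (by positivity), Real.rpow_sub_one hr0.ne' (α - 1)]
    calc r ^ (α - 1) / (p + k * r) ≤ r ^ (α - 1) / (k * r) := by gcongr; linarith
      _ = k⁻¹ * (r ^ (α - 1) / r) := by field_simp

lemma integrableOn_cexp_neg_mul_Ioi {c : ℂ} (hc : 0 < c.re) :
    IntegrableOn (fun t : ℝ => cexp (-(t * c))) (Ioi 0) := by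
  simpa [mul_comm] using integrableOn_exp_mul_complex_Ioi (a := -c) (by simpa using hc) 0

lemma integral_cexp_neg_mul_Ioi {c : ℂ} (hc : 0 < c.re) :
    ∫ t in Ioi (0 : ℝ), cexp (-(t * c)) = c⁻¹ := by
  simpa [mul_comm, neg_div_neg_eq] using
    integral_exp_mul_complex_Ioi (a := -c) (by simpa using hc) 0

lemma integral_norm_cexp_neg_mul_Ioi {c : ℂ} (hc : 0 < c.re) :
    ∫ t in Ioi (0 : ℝ), ‖cexp (-(t * c))‖ = c.re⁻¹ := by
  simpa [Complex.norm_exp, mul_comm] using Real.integral_rpow_mul_exp_neg_mul_Ioi one_pos hc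

/-- The value at `t` of the Bromwich inverse Laplace transform of `g z / z`, for `g` real on the
positive axis. The contour consists of the ray `{r * u | 0 < r}` and its complex conjugate, whose
contributions are conjugate, so that only the imaginary part of the integral over one ray is
left. -/
noncomputable def rayBromwich (g : ℂ → ℂ) (u : ℂ) (t : ℝ) : ℝ :=
  π⁻¹ * (∫ r in Ioi (0 : ℝ), cexp (t * (r * u)) * (g (r * u) / r)).im

section Laplace

variable {g : ℂ → ℂ} {u : ℂ} {α C p : ℝ}

lemma integrable_laplace_ray_kernel (hp : 0 < p) (hu : u.re < 0) (hα₀ : 0 < α) (hα₁ : α < 1)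
    (hg : AEStronglyMeasurable (fun r : ℝ => g (r * u)) (volume.restrict (Ioi 0)))
    (hbound : ∀ r : ℝ, 0 < r → ‖g (r * u)‖ ≤ C * r ^ α) :
    Integrable (fun x : ℝ × ℝ => cexp (-(x.1 * (p - x.2 * u))) * (g (x.2 * u) / x.2))
      ((volume.restrict (Ioi 0)).prod (volume.restrict (Ioi 0))) := by
  have hre : ∀ r : ℝ, (p - r * u).re = p + -u.re * r := fun r => by
    rw [Complex.sub_re, Complex.ofReal_re, Complex.re_ofReal_mul]
    ring
  have hpos : ∀ r : ℝ, 0 < r → 0 < (p - r * u).re := fun r hr => by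
    rw [hre]
    nlinarith
  have hquot : AEStronglyMeasurable (fun r : ℝ => g (r * u) / r) (volume.restrict (Ioi 0)) :=
    hg.div₀ (Measurable.aestronglyMeasurable (by fun_prop))
  have hmeas : AEStronglyMeasurable
      (fun x : ℝ × ℝ => cexp (-(x.1 * (p - x.2 * u))) * (g (x.2 * u) / x.2))
      ((volume.restrict (Ioi 0)).prod (volume.restrict (Ioi 0))) :=
    (Continuous.aestronglyMeasurable (by fun_prop)).mul hquot.comp_snd
  rw [integrable_prod_iff' hmeas]
  constructor
  · filter_upwards [ae_restrict_mem measurableSet_Ioi] with r hr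
    exact (integrableOn_cexp_neg_mul_Ioi (hpos r hr)).mul_const _
  · refine ((integrableOn_rpow_div_add_mul hα₀ hα₁ hp (neg_pos.2 hu)).const_mul C).mono'
      hmeas.norm.prod_swap.integral_prod_right' ?_
    filter_upwards [ae_restrict_mem measurableSet_Ioi] with r hr
    have hr0 : 0 < r := hr
    have hinner : ∫ t in Ioi (0 : ℝ), ‖cexp (-(t * (p - r * u))) * (g (r * u) / r)‖ =
        (p + -u.re * r)⁻¹ * (‖g (r * u)‖ / r) := by
      simp_rw [norm_mul _ (g (r * u) / r)]
      rw [integral_mul_const, integral_norm_cexp_neg_mul_Ioi (hpos r hr), hre, norm_div,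
        Complex.norm_of_nonneg hr0.le]
    have hpr : 0 < p + -u.re * r := hre r ▸ hpos r hr
    rw [hinner, Real.norm_of_nonneg (by positivity), Real.rpow_sub_one hr0.ne']
    calc (p + -u.re * r)⁻¹ * (‖g (r * u)‖ / r)
        ≤ (p + -u.re * r)⁻¹ * (C * r ^ α / r) := by
          gcongr
          exact hbound r hr0
      _ = C * (r ^ α / r / (p + -u.re * r)) := by ring

lemma exp_neg_mul_mul_rayBromwich (t : ℝ) :
    rexp (-p * t) * rayBromwich g u t =
      π⁻¹ * (∫ r in Ioi (0 : ℝ), cexp (-(t * (p - r * u))) * (g (r * u) / r)).im := by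
  have hexp : ∀ r : ℝ, cexp (-(t * (p - r * u))) * (g (r * u) / r) =
      (rexp (-p * t) : ℂ) * (cexp (t * (r * u)) * (g (r * u) / r)) := fun r => by
    rw [Complex.ofReal_exp, ← mul_assoc, ← Complex.exp_add]
    push_cast
    ring_nf
  simp_rw [hexp]
  rw [integral_const_mul, Complex.im_ofReal_mul, rayBromwich, mul_left_comm]

lemma integral_laplace_ray_kernel {r : ℝ} (hp : 0 < p) (hu : u.re < 0) (hr : 0 < r) :
    ∫ t in Ioi (0 : ℝ), cexp (-(t * (p - r * u))) * (g (r * u) / r) =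
      g (r * u) / (r * (p - r * u)) := by
  have hre : 0 < (p - r * u).re := by
    rw [Complex.sub_re, Complex.ofReal_re, Complex.re_ofReal_mul]
    nlinarith
  rw [integral_mul_const, integral_cexp_neg_mul_Ioi hre, inv_mul_eq_div, div_div]

variable (hp : 0 < p) (hu : u.re < 0) (hα₀ : 0 < α) (hα₁ : α < 1)
  (hg : AEStronglyMeasurable (fun r : ℝ => g (r * u)) (volume.restrict (Ioi 0)))
  (hbound : ∀ r : ℝ, 0 < r → ‖g (r * u)‖ ≤ C * r ^ α)

include hp hu hα₀ hα₁ hg hbound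

lemma integrableOn_ray_div_sub :
    IntegrableOn (fun r : ℝ => g (r * u) / (r * (p - r * u))) (Ioi 0) := by
  refine (integrable_laplace_ray_kernel hp hu hα₀ hα₁ hg hbound).integral_prod_right.congr ?_
  filter_upwards [ae_restrict_mem measurableSet_Ioi] with r hr using
    integral_laplace_ray_kernel hp hu hr

lemma integrableOn_exp_neg_mul_mul_rayBromwich :
    IntegrableOn (fun t => rexp (-p * t) * rayBromwich g u t) (Ioi 0) := by
  simp_rw [exp_neg_mul_mul_rayBromwich]
  exact (integrable_laplace_ray_kernel hp hu hα₀ hα₁ hg hbound).integral_prod_left.im.const_mul _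

theorem integral_exp_neg_mul_mul_rayBromwich :
    ∫ t in Ioi (0 : ℝ), rexp (-p * t) * rayBromwich g u t =
      π⁻¹ * (∫ r in Ioi (0 : ℝ), g (r * u) / (r * (p - r * u))).im := by
  have hK := integrable_laplace_ray_kernel hp hu hα₀ hα₁ hg hbound
  have him := integral_im hK.integral_prod_left
  simp only [RCLike.im_to_complex] at him
  simp_rw [exp_neg_mul_mul_rayBromwich]
  rw [integral_const_mul, him, integral_integral_swap hK,
    setIntegral_congr_fun measurableSet_Ioi fun r hr => integral_laplace_ray_kernel hp hu hr]

end Laplace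

lemma Gamma_mul_sin_pi_mul {s : ℝ} (hs : 0 < s) :
    Real.Gamma s * sin (π * s) = π / Real.Gamma (1 - s) := by
  have hrefl := Real.Gamma_mul_Gamma_one_sub s
  have hG := (Real.Gamma_pos_of_pos hs).ne'
  by_cases hsin : sin (π * s) = 0
  · rw [hsin, div_zero] at hrefl
    rw [hsin, (mul_eq_zero.1 hrefl).resolve_left hG, mul_zero, div_zero]
  · have hG' : Real.Gamma (1 - s) ≠ 0 := right_ne_zero_of_mul <|
      hrefl.trans_ne (div_ne_zero Real.pi_ne_zero hsin)
    rw [eq_div_iff hG', mul_right_comm, hrefl, div_mul_cancel₀ _ hsin]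

section HankelIntegral

variable {s t θ : ℝ}

lemma norm_cexp_mul_add_mul_cexp (w : ℂ) :
    ‖cexp (s * w + t * cexp w)‖ = rexp w.re ^ s * rexp (-(-t * cos w.im) * rexp w.re) := by
  rw [Complex.norm_exp, Complex.add_re, Complex.re_ofReal_mul, Complex.re_ofReal_mul,
    Complex.exp_re, ← Real.exp_mul, ← Real.exp_add]
  ring_nf

lemma tendsto_cexp_mul_add_mul_cexp {l : Filter ℝ} (ht : 0 < t) (hθ₀ : π / 2 < θ) (hθ : θ ≤ π)
    (hl : Tendsto (fun x => rexp x ^ s * rexp (-(-t * cos θ) * rexp x)) l (𝓝 0)) :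
    Tendsto (fun w => cexp (s * w + t * cexp w))
      (comap Complex.re l ⊓ 𝓟 (Complex.im ⁻¹' uIcc θ π)) (𝓝 0) := by
  refine squeeze_zero_norm' (mem_inf_of_right fun w hw => ?_)
    ((hl.comp tendsto_comap).mono_left inf_le_left)
  rw [uIcc_of_le hθ] at hw
  have hcos : cos w.im ≤ cos θ :=
    Real.cos_le_cos_of_nonneg_of_le_pi (by linarith [Real.pi_pos]) hw.2 hw.1
  rw [mem_ofPred_eq, norm_cexp_mul_add_mul_cexp, Function.comp_apply]
  simp only [neg_mul, neg_neg]
  gcongr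

lemma cos_neg_of_pi_div_two_lt_of_le_pi (hθ₀ : π / 2 < θ) (hθ : θ ≤ π) : cos θ < 0 :=
  Real.cos_neg_of_pi_div_two_lt_of_lt hθ₀ (by linarith [Real.pi_pos])

lemma cexp_ofReal_mul_I_re_neg (hθ₀ : π / 2 < θ) (hθ : θ ≤ π) : (cexp (θ * I)).re < 0 := by
  rw [Complex.exp_ofReal_mul_I_re]
  exact cos_neg_of_pi_div_two_lt_of_le_pi hθ₀ hθ

lemma integrable_cexp_mul_add_mul_cexp (hs : 0 < s) (ht : 0 < t) (hθ₀ : π / 2 < θ) (hθ : θ ≤ π) :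
    Integrable fun x : ℝ => cexp (s * (x + θ * I) + t * cexp (x + θ * I)) := by
  have hk : 0 < -t * cos θ :=
    mul_pos_of_neg_of_neg (neg_neg_of_pos ht) (cos_neg_of_pi_div_two_lt_of_le_pi hθ₀ hθ)
  have h := (integrable_exp_smul_comp_exp _).2
    (integrableOn_rpow_mul_exp_neg_mul_rpow (by linarith : -1 < s - 1) one_pos hk)
  refine h.mono' (Continuous.aestronglyMeasurable (by fun_prop)) (ae_of_all _ fun x => ?_)
  rw [norm_cexp_mul_add_mul_cexp, Real.rpow_sub_one (Real.exp_ne_zero _), Real.rpow_one,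
    smul_eq_mul, ← mul_assoc, mul_div_cancel₀ _ (Real.exp_ne_zero _)]
  simp

lemma integral_ray_cexp_mul_cpow (hθ₀ : -π < θ) (hθ : θ ≤ π) :
    ∫ r in Ioi (0 : ℝ), cexp (t * (r * cexp (θ * I))) * ((r * cexp (θ * I)) ^ (s : ℂ) / r) =
      ∫ x : ℝ, cexp (s * (x + θ * I) + t * cexp (x + θ * I)) := by
  rw [← integral_exp_smul_comp_exp]
  refine integral_congr_ae (ae_of_all _ fun x => ?_)
  have hlog : Complex.log (cexp (x + θ * I)) = x + θ * I :=
    Complex.log_exp (by simpa using hθ₀) (by simpa using hθ)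
  have hx := Complex.exp_ne_zero x
  simp only [Complex.real_smul, Complex.ofReal_exp]
  rw [← Complex.exp_add x, Complex.cpow_def_of_ne_zero (Complex.exp_ne_zero _), hlog,
    Complex.exp_add (s * _), mul_comm (s : ℂ), mul_left_comm, mul_div_cancel₀ _ hx, mul_comm]

lemma integral_cexp_mul_add_mul_cexp_pi (hs : 0 < s) (ht : 0 < t) :
    ∫ x : ℝ, cexp (s * (x + π * I) + t * cexp (x + π * I)) =
      (t ^ (-s) * Real.Gamma s : ℝ) * cexp ((π * s : ℝ) * I) := by
  have hval : ∀ x : ℝ, cexp (s * (x + π * I) + t * cexp (x + π * I)) =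
      (rexp x • (rexp x ^ (s - 1) * rexp (-(t * rexp x))) : ℝ) * cexp ((π * s : ℝ) * I) := by
    intro x
    rw [smul_eq_mul, ← Real.exp_mul, ← Real.exp_add, ← Real.exp_add, Complex.ofReal_exp,
      ← Complex.exp_add, Complex.exp_add x, Complex.exp_pi_mul_I]
    push_cast
    ring_nf
  simp_rw [hval]
  rw [integral_mul_const, integral_complex_ofReal,
    integral_exp_smul_comp_exp fun r => r ^ (s - 1) * rexp (-(t * r)),
    Real.integral_rpow_mul_exp_neg_mul_Ioi hs ht, one_div, Real.inv_rpow ht.le,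
    Real.rpow_neg ht.le]

/-- Hankel's representation of `1 / Γ`, folded onto a single ray. -/
theorem rayBromwich_cpow (hs : 0 < s) (ht : 0 < t) (hθ₀ : π / 2 < θ) (hθ : θ ≤ π) :
    rayBromwich (fun z => z ^ (s : ℂ)) (cexp (θ * I)) t = t ^ (-s) / Real.Gamma (1 - s) := by
  have hk : 0 < -t * cos θ :=
    mul_pos_of_neg_of_neg (neg_neg_of_pos ht) (cos_neg_of_pi_div_two_lt_of_le_pi hθ₀ hθ)
  have hbot : Tendsto (fun x => rexp x ^ s * rexp (-(-t * cos θ) * rexp x)) atBot (𝓝 0) := by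
    have hcont : Continuous fun y : ℝ => y ^ s * rexp (-(-t * cos θ) * y) :=
      (Real.continuous_rpow_const hs.le).mul (by fun_prop)
    simpa [hs.ne', Function.comp_def] using (hcont.tendsto 0).comp Real.tendsto_exp_atBot
  have htop := (tendsto_rpow_mul_exp_neg_mul_atTop_nhds_zero s _ hk).comp Real.tendsto_exp_atTop
  have hshift : ∫ x : ℝ, cexp (s * (x + θ * I) + t * cexp (x + θ * I)) =
      ∫ x : ℝ, cexp (s * (x + π * I) + t * cexp (x + π * I)) :=
    integral_horizontal_eq_of_strip (F := fun w => cexp (s * w + t * cexp w))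
      (by fun_prop) (tendsto_cexp_mul_add_mul_cexp ht hθ₀ hθ hbot)
      (tendsto_cexp_mul_add_mul_cexp ht hθ₀ hθ htop)
      (integrable_cexp_mul_add_mul_cexp hs ht hθ₀ hθ)
      (integrable_cexp_mul_add_mul_cexp hs ht (by linarith [Real.pi_pos]) le_rfl)
  rw [rayBromwich, integral_ray_cexp_mul_cpow (by linarith [Real.pi_pos]) hθ, hshift,
    integral_cexp_mul_add_mul_cexp_pi hs ht, Complex.im_ofReal_mul, Complex.exp_ofReal_mul_I_im,
    mul_assoc, Gamma_mul_sin_pi_mul hs]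
  field_simp

end HankelIntegral

lemma rayBromwich_ofReal_mul (c : ℝ) (g : ℂ → ℂ) (u : ℂ) (t : ℝ) :
    rayBromwich (fun z => c * g z) u t = c * rayBromwich g u t := by
  have hc : ∀ r : ℝ, cexp (t * (r * u)) * (c * g (r * u) / r) =
      c * (cexp (t * (r * u)) * (g (r * u) / r)) := fun r => by ring
  simp_rw [rayBromwich, hc]
  rw [integral_const_mul, Complex.im_ofReal_mul, mul_left_comm]

section SectorialGrowth

variable {g : ℂ → ℂ} {α C p θ : ℝ}

lemma ofReal_mul_cexp_mem_sector (hθ₀ : 0 ≤ θ) (hθ : θ ≤ π) {r : ℝ} (hr : 0 < r) :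
    r * cexp (θ * I) ∈ sector θ := by
  have h := exp_mem_sector hθ (w := Real.log r + θ * I) (by simpa using hθ₀)
  rwa [Complex.exp_add, ← Complex.ofReal_exp, Real.exp_log hr] at h

lemma norm_ofReal_mul_cexp {r : ℝ} (hr : 0 < r) : ‖r * cexp (θ * I)‖ = r := by
  rw [norm_mul, Complex.norm_exp_ofReal_mul_I, mul_one, Complex.norm_of_nonneg hr.le]

lemma aestronglyMeasurable_comp_ray (hθ₀ : 0 ≤ θ) (hθ : θ < π) (hg : ContinuousOn g slitPlane) :
    AEStronglyMeasurable (fun r : ℝ => g (r * cexp (θ * I))) (volume.restrict (Ioi 0)) :=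
  (hg.comp (Continuous.continuousOn (by fun_prop)) fun _ hr =>
    sector_subset_slitPlane hθ (ofReal_mul_cexp_mem_sector hθ₀ hθ.le hr)).aestronglyMeasurable
    measurableSet_Ioi

lemma norm_ray_le (hθ₀ : 0 ≤ θ) (hθ : θ ≤ π) (hbound : ∀ z ∈ sector θ, ‖g z‖ ≤ C * ‖z‖ ^ α) {r : ℝ}
    (hr : 0 < r) : ‖g (r * cexp (θ * I))‖ ≤ C * r ^ α := by
  simpa only [norm_ofReal_mul_cexp hr] using hbound _ (ofReal_mul_cexp_mem_sector hθ₀ hθ hr)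

lemma integral_exp_neg_mul_mul_rayBromwich_cpow (hp : 0 < p) (hα₀ : 0 < α) (hα₁ : α < 1)
    (hθ₀ : π / 2 < θ) (hθ : θ ≤ π) :
    ∫ t in Ioi (0 : ℝ), rexp (-p * t) * rayBromwich (fun z => z ^ (α : ℂ)) (cexp (θ * I)) t =
      p ^ α / p := by
  have hinv : ∀ t ∈ Ioi (0 : ℝ),
      rexp (-p * t) * rayBromwich (fun z => z ^ (α : ℂ)) (cexp (θ * I)) t =
        (Real.Gamma (1 - α))⁻¹ * (t ^ (1 - α - 1) * rexp (-(p * t))) := by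
    intro t ht
    rw [rayBromwich_cpow hα₀ ht hθ₀ hθ, sub_sub_cancel_left, neg_mul]
    ring
  have hΓ : Real.Gamma (1 - α) ≠ 0 := (Real.Gamma_pos_of_pos (sub_pos.2 hα₁)).ne'
  rw [setIntegral_congr_fun measurableSet_Ioi hinv, integral_const_mul,
    Real.integral_rpow_mul_exp_neg_mul_Ioi (sub_pos.2 hα₁) hp, mul_comm, mul_inv_cancel_right₀ hΓ,
    one_div, Real.inv_rpow hp.le, ← Real.rpow_neg hp.le, neg_sub, Real.rpow_sub_one hp.ne']

variable (hp : 0 < p) (hα₀ : 0 < α) (hα₁ : α < 1) (hθ₀ : π / 2 < θ) (hθ : θ < π)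
  (hg : DifferentiableOn ℂ g slitPlane) (hbound : ∀ z ∈ sector θ, ‖g z‖ ≤ C * ‖z‖ ^ α)

include hp hα₀ hα₁ hθ₀ hθ hg hbound

lemma integrableOn_exp_neg_mul_mul_rayBromwich_of_sector :
    IntegrableOn (fun t => rexp (-p * t) * rayBromwich g (cexp (θ * I)) t) (Ioi 0) := by
  have hθ₁ : 0 ≤ θ := by linarith [Real.pi_pos]
  exact integrableOn_exp_neg_mul_mul_rayBromwich hp (cexp_ofReal_mul_I_re_neg hθ₀ hθ.le) hα₀ hα₁
    (aestronglyMeasurable_comp_ray hθ₁ hθ hg.continuousOn) fun r => norm_ray_le hθ₁ hθ.le hbound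

theorem integral_exp_neg_mul_mul_rayBromwich_eq_div
    (hreal : ∀ r : ℝ, 0 < r → (g r).im = 0) :
    ∫ t in Ioi (0 : ℝ), rexp (-p * t) * rayBromwich g (cexp (θ * I)) t = (g p).re / p := by
  have hθ₁ : 0 < θ := by linarith [Real.pi_pos]
  have hu := cexp_ofReal_mul_I_re_neg hθ₀ hθ.le
  have hgm := aestronglyMeasurable_comp_ray hθ₁.le hθ hg.continuousOn
  have hgn : ∀ r : ℝ, 0 < r → ‖g (r * cexp (θ * I))‖ ≤ C * r ^ α := fun r =>
    norm_ray_le hθ₁.le hθ.le hbound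
  have hpowm : AEStronglyMeasurable (fun r : ℝ => (r * cexp (θ * I)) ^ (α : ℂ))
      (volume.restrict (Ioi 0)) := Measurable.aestronglyMeasurable (by fun_prop)
  have hpown : ∀ r : ℝ, 0 < r → ‖(r * cexp (θ * I)) ^ (α : ℂ)‖ ≤ 1 * r ^ α := fun r hr => by
    rw [Complex.norm_cpow_real, norm_ofReal_mul_cexp hr, one_mul]
  have hpα : p ^ α ≠ 0 := (Real.rpow_pos_of_pos hp α).ne'
  rw [integral_exp_neg_mul_mul_rayBromwich hp hu hα₀ hα₁ hgm hgn,
    im_integral_ray_div_sub_eq_mul hp hα₀ hα₁ hθ₁ hθ hg hreal hbound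
      (integrableOn_ray_div_sub hp hu hα₀ hα₁ hgm hgn)
      (integrableOn_ray_div_sub (g := fun z => z ^ (α : ℂ)) hp hu hα₀ hα₁ hpowm hpown),
    mul_left_comm, ← integral_exp_neg_mul_mul_rayBromwich (g := fun z => z ^ (α : ℂ)) hp hu hα₀ hα₁
      hpowm hpown, integral_exp_neg_mul_mul_rayBromwich_cpow hp hα₀ hα₁ hθ₀ hθ.le]
  field_simp

theorem integral_exp_neg_mul_mul_one_add_rayBromwich (hreal : ∀ r : ℝ, 0 < r → (g r).im = 0) :
    ∫ t in Ioi (0 : ℝ), rexp (-p * t) * (1 + rayBromwich g (cexp (θ * I)) t) =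
      (1 + (g p).re) / p := by
  simp_rw [mul_add, mul_one]
  rw [integral_add (integrableOn_exp_mul_Ioi (neg_neg_of_pos hp) 0)
      (integrableOn_exp_neg_mul_mul_rayBromwich_of_sector hp hα₀ hα₁ hθ₀ hθ hg hbound),
    integral_exp_mul_Ioi (neg_neg_of_pos hp),
    integral_exp_neg_mul_mul_rayBromwich_eq_div hp hα₀ hα₁ hθ₀ hθ hg hbound hreal,
    mul_zero, Real.exp_zero, neg_div_neg_eq, add_div]

end SectorialGrowth

section Series

lemma hasSum_pow_succ_div_factorial {𝔸 : Type*} [NormedDivisionRing 𝔸] [NormedAlgebra ℚ 𝔸]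
    [CompleteSpace 𝔸] (x : 𝔸) :
    HasSum (fun n : ℕ => x ^ (n + 1) / ((n + 1).factorial : 𝔸)) (NormedSpace.exp x - 1) := by
  simpa using (hasSum_nat_add_iff' 1).2 (NormedSpace.expSeries_div_hasSum_exp x)

lemma exp_sub_one_le_mul_exp (y : ℝ) : rexp y - 1 ≤ y * rexp y := by
  have h := mul_le_mul_of_nonneg_right (Real.one_sub_le_exp_neg y) (Real.exp_pos y).le
  rw [← Real.exp_add, neg_add_cancel, Real.exp_zero] at h
  linarith

lemma exists_mul_rpow_le_add_mul {x k α : ℝ} (hx : 0 ≤ x) (hk : 0 < k) (hα₀ : 0 ≤ α)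
    (hα₁ : α < 1) : ∃ M : ℝ, ∀ r : ℝ, 0 ≤ r → x * r ^ α ≤ M + k * r := by
  have hα : 0 < 1 - α := sub_pos.2 hα₁
  set m : ℝ := (x / k) ^ (1 - α)⁻¹
  have hm0 : 0 ≤ m := by positivity
  have hmα : m ^ (1 - α) = x / k := Real.rpow_inv_rpow (by positivity) hα.ne'
  refine ⟨k * m, fun r hr => ?_⟩
  calc x * r ^ α = k * (r ^ α * m ^ (1 - α)) := by
        rw [hmα]
        field_simp
    _ ≤ k * (α * r + (1 - α) * m) := by
        gcongr
        exact Real.geom_mean_le_arith_mean2_weighted hα₀ hα.le hr hm0 (by ring)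
    _ ≤ k * m + k * r := by nlinarith [mul_nonneg hk.le hr, mul_nonneg hk.le hm0]

lemma integrableOn_exp_neg_mul_mul_exp_rpow_sub_one_div {x k α : ℝ} (hx : 0 ≤ x) (hk : 0 < k)
    (hα₀ : 0 < α) (hα₁ : α < 1) :
    IntegrableOn (fun r : ℝ => rexp (-(k * r)) * ((rexp (x * r ^ α) - 1) / r)) (Ioi 0) := by
  obtain ⟨M, hM⟩ := exists_mul_rpow_le_add_mul hx (half_pos hk) hα₀.le hα₁
  have hdom := (integrableOn_rpow_mul_exp_neg_mul_rpow (by linarith : -1 < α - 1) one_pos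
    (half_pos hk)).const_mul (x * rexp M)
  refine hdom.mono' (Measurable.aestronglyMeasurable (by fun_prop)) ?_
  filter_upwards [ae_restrict_mem measurableSet_Ioi] with r hr
  have hr0 : 0 < r := hr
  have hexp : 0 ≤ rexp (x * r ^ α) - 1 := sub_nonneg.2 (Real.one_le_exp (by positivity))
  rw [Real.norm_of_nonneg (by positivity), Real.rpow_one]
  calc rexp (-(k * r)) * ((rexp (x * r ^ α) - 1) / r)
      ≤ rexp (-(k * r)) * (x * r ^ α * rexp (M + k / 2 * r) / r) := by
        gcongr
        exact (exp_sub_one_le_mul_exp _).trans (by gcongr; exact hM r hr0.le)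
    _ = x * rexp M * (r ^ (α - 1) * rexp (-(k / 2) * r)) := by
        have hsplit : rexp (-(k * r)) * rexp (k / 2 * r) = rexp (-(k / 2) * r) := by
          rw [← Real.exp_add]
          ring_nf
        rw [Real.exp_add, Real.rpow_sub_one hr0.ne', ← hsplit]
        ring

variable {α t : ℝ}

lemma hasSum_integral_ray_cexp_cpow_sub_one {u : ℂ} (c : ℂ) (hα₀ : 0 < α) (hα₁ : α < 1)
    (ht : 0 < t) (hu : u.re < 0) :
    HasSum (fun n : ℕ => ∫ r in Ioi (0 : ℝ), cexp (t * (r * u)) *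
        ((c * (r * u) ^ (α : ℂ)) ^ (n + 1) / ((n + 1).factorial : ℂ) / r))
      (∫ r in Ioi (0 : ℝ), cexp (t * (r * u)) * ((cexp (c * (r * u) ^ (α : ℂ)) - 1) / r)) := by
  set x : ℝ := ‖c‖ * ‖u‖ ^ α with hx
  set k : ℝ := -(t * u.re) with hk
  have hk0 : 0 < k := neg_pos.2 (mul_neg_of_pos_of_neg ht hu)
  have hmajorant : ∀ r : ℝ, HasSum
      (fun n : ℕ => rexp (-(k * r)) * ((x * r ^ α) ^ (n + 1) / ((n + 1).factorial : ℝ) / r))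
      (rexp (-(k * r)) * ((rexp (x * r ^ α) - 1) / r)) := fun r => by
    rw [Real.exp_eq_exp_ℝ]
    exact ((hasSum_pow_succ_div_factorial (x * r ^ α)).div_const r).mul_left _
  refine hasSum_integral_of_dominated_convergence
    (fun n r => rexp (-(k * r)) * ((x * r ^ α) ^ (n + 1) / ((n + 1).factorial : ℝ) / r))
    (fun n => Measurable.aestronglyMeasurable (by fun_prop)) (fun n => ?_)
    (ae_of_all _ fun r => (hmajorant r).summable) ?_ (ae_of_all _ fun r => ?_)
  · filter_upwards [ae_restrict_mem measurableSet_Ioi] with r hr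
    have hr0 : 0 ≤ r := (mem_Ioi.1 hr).le
    have hnorm : ‖c * (r * u) ^ (α : ℂ)‖ = x * r ^ α := by
      rw [norm_mul, Complex.norm_cpow_real, norm_mul, Complex.norm_of_nonneg hr0,
        Real.mul_rpow hr0 (norm_nonneg u), hx]
      ring
    have hexp : ‖cexp (t * (r * u))‖ = rexp (-(k * r)) := by
      rw [Complex.norm_exp, Complex.re_ofReal_mul, Complex.re_ofReal_mul, hk]
      ring_nf
    rw [norm_mul, hexp, norm_div, norm_div, norm_pow, hnorm, Complex.norm_natCast,
      Complex.norm_of_nonneg hr0]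
  · simp_rw [fun r => (hmajorant r).tsum_eq]
    exact integrableOn_exp_neg_mul_mul_exp_rpow_sub_one_div (by positivity) hk0 hα₀ hα₁
  · rw [Complex.exp_eq_exp_ℂ]
    exact ((hasSum_pow_succ_div_factorial (c * (r * u) ^ (α : ℂ))).div_const (r : ℂ)).mul_left _

theorem hasSum_rayBromwich_cexp_neg_cpow_sub_one {τ θ : ℝ} (hα₀ : 0 < α) (hα₁ : α < 1)
    (ht : 0 < t) (hθ₀ : π / 2 < θ) (hθ : θ ≤ π) :
    HasSum (fun n : ℕ => (-τ) ^ (n + 1) / ((n + 1).factorial : ℝ) *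
        (t ^ (-(((n + 1 : ℕ) : ℝ) * α)) / Real.Gamma (1 - ((n + 1 : ℕ) : ℝ) * α)))
      (rayBromwich (fun z => cexp (-(τ * z ^ (α : ℂ))) - 1) (cexp (θ * I)) t) := by
  have hterm : ∀ n : ℕ, rayBromwich
      (fun z => (-τ * z ^ (α : ℂ)) ^ (n + 1) / ((n + 1).factorial : ℂ)) (cexp (θ * I)) t =
      (-τ) ^ (n + 1) / ((n + 1).factorial : ℝ) *
        (t ^ (-(((n + 1 : ℕ) : ℝ) * α)) / Real.Gamma (1 - ((n + 1 : ℕ) : ℝ) * α)) := by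
    intro n
    rw [← rayBromwich_cpow (by positivity) ht hθ₀ hθ, ← rayBromwich_ofReal_mul]
    congr 1 with z
    rw [mul_pow, ← Complex.cpow_nat_mul]
    push_cast
    ring
  have hsum := (Complex.hasSum_im
    (hasSum_integral_ray_cexp_cpow_sub_one (-τ : ℂ) hα₀ hα₁ ht
      (cexp_ofReal_mul_I_re_neg hθ₀ hθ))).mul_left π⁻¹
  simp_rw [← hterm, ← neg_mul]
  exact hsum

end Series

lemma norm_cexp_neg_sub_one_le {w : ℂ} (hw : 0 ≤ w.re) : ‖cexp (-w) - 1‖ ≤ ‖w‖ := by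
  have h := (convex_halfSpace_re_le 0).norm_image_sub_le_of_norm_deriv_le (𝕜 := ℂ) (f := cexp)
    (x := 0) (y := -w) (C := 1) (fun z _ => Complex.differentiableAt_exp)
    (fun z hz => by
      rw [Complex.deriv_exp, Complex.norm_exp]
      exact Real.exp_le_one_iff.2 hz)
    (by simp) (by simpa using hw)
  simpa using h

lemma cpow_re_nonneg_of_mem_sector {α θ : ℝ} (hα : 0 ≤ α) (hαθ : α * θ ≤ π / 2) {z : ℂ}
    (hz : z ∈ sector θ) : 0 ≤ (z ^ (α : ℂ)).re := by
  have harg : z.arg * α ≤ π / 2 := by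
    rw [mul_comm]
    exact (mul_le_mul_of_nonneg_left hz.2.2 hα).trans hαθ
  rw [Complex.cpow_ofReal_re]
  refine mul_nonneg (by positivity) (Real.cos_nonneg_of_neg_pi_div_two_le_of_le ?_ harg)
  linarith [mul_nonneg hz.2.1 hα, Real.pi_pos]

lemma norm_cexp_neg_mul_cpow_sub_one_le {α θ τ : ℝ} (hα : 0 ≤ α) (hαθ : α * θ ≤ π / 2) (hτ : 0 ≤ τ)
    {z : ℂ} (hz : z ∈ sector θ) : ‖cexp (-(τ * z ^ (α : ℂ))) - 1‖ ≤ τ * ‖z‖ ^ α := by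
  have hre : 0 ≤ (τ * z ^ (α : ℂ)).re := by
    rw [Complex.re_ofReal_mul]
    exact mul_nonneg hτ (cpow_re_nonneg_of_mem_sector hα hαθ hz)
  simpa only [norm_mul, Complex.norm_cpow_real, Complex.norm_of_nonneg hτ] using
    norm_cexp_neg_sub_one_le hre

lemma cexp_neg_mul_ofReal_cpow_sub_one {α τ r : ℝ} (hr : 0 ≤ r) :
    cexp (-(τ * (r : ℂ) ^ (α : ℂ))) - 1 = (rexp (-τ * r ^ α) - 1 : ℝ) := by
  push_cast
  rw [Complex.ofReal_cpow hr, neg_mul]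

lemma differentiableOn_cexp_neg_mul_cpow_sub_one (α τ : ℝ) :
    DifferentiableOn ℂ (fun z => cexp (-(τ * z ^ (α : ℂ))) - 1) slitPlane := fun _ hz =>
  ((((differentiableAt_id.cpow_const hz).const_mul _).neg.cexp).sub_const 1).differentiableWithinAt

theorem Nwr_div_rpow_eq_one_add_rayBromwich {β τ t θ : ℝ} (hβ₀ : 0 < β) (hβ : β < 1 / 2)
    (ht : 0 < t) (hθ₀ : π / 2 < θ) (hθ : θ ≤ π) :
    Nwr (τ / t ^ (2 * β)) β =
      1 + rayBromwich (fun z => cexp (-(τ * z ^ ((2 * β : ℝ) : ℂ))) - 1) (cexp (θ * I)) t := by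
  set f : ℕ → ℝ := fun n =>
    (-(τ / t ^ (2 * β))) ^ n / ((n.factorial : ℝ) * Real.Gamma (-2 * β * (n : ℝ) + 1)) with hf
  have hterm : ∀ n : ℕ, (-τ) ^ n / (n.factorial : ℝ) *
      (t ^ (-((n : ℝ) * (2 * β))) / Real.Gamma (1 - (n : ℝ) * (2 * β))) = f n := by
    intro n
    simp only [hf]
    have hΓ : -2 * β * (n : ℝ) + 1 = 1 - n * (2 * β) := by ring
    rw [hΓ, Real.rpow_neg ht.le, mul_comm (n : ℝ) (2 * β), Real.rpow_mul ht.le, Real.rpow_natCast,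
      ← neg_div, div_pow]
    field_simp
  have htail : HasSum (fun n => f (n + 1))
      (rayBromwich (fun z => cexp (-(τ * z ^ ((2 * β : ℝ) : ℂ))) - 1) (cexp (θ * I)) t) := by
    simp only [← hterm]
    exact hasSum_rayBromwich_cexp_neg_cpow_sub_one (τ := τ) (by linarith) (by linarith) ht hθ₀ hθ
  have hhead : ∑ n ∈ Finset.range 1, f n = 1 := by simp [hf]
  rw [add_comm, ← hhead]
  exact ((hasSum_nat_add_iff (f := f) 1).1 htail).tsum_eq

lemma exists_angle_mul_le_pi_div_two {α : ℝ} (hα₀ : 0 < α) (hα₁ : α < 1) :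
    ∃ θ : ℝ, π / 2 < θ ∧ θ < π ∧ α * θ ≤ π / 2 := by
  have hα : 0 < 1 + α := by linarith
  refine ⟨π / (1 + α), ?_, ?_, ?_⟩
  · exact div_lt_div_of_pos_left Real.pi_pos hα (by linarith)
  · exact div_lt_self Real.pi_pos (by linarith)
  · rw [← mul_div_assoc, div_le_div_iff₀ hα two_pos]
    nlinarith [Real.pi_pos]

end

/-- Laplace transform of the Wright N-function:
`L{ N(τ/t^{2β}; β) }(p) = (1/p) exp(−τ p^{2β})` for `0 < β < 1/2`, `τ > 0`, `p > 0`. -/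
theorem laplace_wright_N (β τ p : ℝ) (hβ₁ : 0 < β) (hβ₂ : β < 1 / 2)
    (hτ : 0 < τ) (hp : 0 < p) :
    ∫ t in Ioi (0 : ℝ), Real.exp (-p * t) * Nwr (τ / t ^ (2 * β)) β =
      (1 / p) * Real.exp (-τ * p ^ (2 * β)) := by
  have hα₀ : 0 < 2 * β := by linarith
  have hα₁ : 2 * β < 1 := by linarith
  -- the angle is large enough for `exp (t * z)` to decay on the ray and small enough for
  -- `exp (-τ * z ^ (2 * β))` to stay bounded on the sector
  obtain ⟨θ, hθ₀, hθ, hαθ⟩ := exists_angle_mul_le_pi_div_two hα₀ hα₁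
  set g : ℂ → ℂ := fun z => Complex.exp (-(τ * z ^ ((2 * β : ℝ) : ℂ))) - 1
  have hg : DifferentiableOn ℂ g Complex.slitPlane :=
    differentiableOn_cexp_neg_mul_cpow_sub_one (2 * β) τ
  have hgr (r : ℝ) (hr : 0 < r) : g r = (rexp (-τ * r ^ (2 * β)) - 1 : ℝ) :=
    cexp_neg_mul_ofReal_cpow_sub_one hr.le
  have hbound (z) (hz : z ∈ sector θ) : ‖g z‖ ≤ τ * ‖z‖ ^ (2 * β) :=
    norm_cexp_neg_mul_cpow_sub_one_le hα₀.le hαθ hτ.le hz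
  calc ∫ t in Ioi (0 : ℝ), rexp (-p * t) * Nwr (τ / t ^ (2 * β)) β
      = ∫ t in Ioi (0 : ℝ), rexp (-p * t) *
          (1 + rayBromwich g (Complex.exp (θ * Complex.I)) t) :=
        setIntegral_congr_fun measurableSet_Ioi fun t ht => by
          rw [Nwr_div_rpow_eq_one_add_rayBromwich hβ₁ hβ₂ ht hθ₀ hθ.le]
    _ = (1 + (g p).re) / p :=
        integral_exp_neg_mul_mul_one_add_rayBromwich hp hα₀ hα₁ hθ₀ hθ hg hbound fun r hr => by
          rw [hgr r hr, Complex.ofReal_im]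
    _ = 1 / p * rexp (-τ * p ^ (2 * β)) := by
        rw [hgr p hp, Complex.ofReal_re, add_sub_cancel, div_eq_inv_mul, one_div]
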